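/- Suppose the symmetric matrix P satisfies G ⪯ 0 and sₘ ≥ 0 for m = 1,…,n. Then for every a ∈ ℝⁿ with ‖a‖ ≤ δ, the quadratic Lyapunov function V(a) = aᵀPa satisfies the dissipation inequality 2aᵀP(La + Υ(a)) ≤ −ε aᵀa along the unforced dynamics ȧ = La + Υ(a). -/

import Mathlib

/-!
Evaluate the quadratic form of `G` at `z = (a, Υ(a))`. The multiplier terms vanish: those in `μ₀`
because `aᵀΥ(a) = 0`, those in `μᵢ` and `κⱼ` because each carries a factor `vᵀΥ(a) = 0`. Hence
`G ⪯ 0` reads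
`2aᵀP(La + Υ(a)) + ε aᵀa + Σₘ sₘ (δ² ‖Rₘa‖² − Υₘ(a)²) ≤ 0`,
and by Cauchy–Schwarz (`Ups_sq_le`) `Υₘ(a)² = (aᵀRₘa)² ≤ ‖a‖² ‖Rₘa‖² ≤ δ² ‖Rₘa‖²` on the ball
`‖a‖ ≤ δ`, so the sum is nonnegative and can be dropped (S-procedure).
-/

noncomputable section

open Matrix

/-- Euclidean norm on `Fin n → ℝ`. -/
def eNorm {n : ℕ} (a : Fin n → ℝ) : ℝ := Real.sqrt (∑ i, a i ^ 2)

/-- The quadratic nonlinearity `Υ`, with components `Υₘ(a) = aᵀ Rₘ a`. -/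
def Ups {n : ℕ} (R : Fin n → Matrix (Fin n) (Fin n) ℝ) (a : Fin n → ℝ) : Fin n → ℝ :=
  fun m => a ⬝ᵥ (R m).mulVec a

/-- The 2n×2n block LMI matrix
`G = [[LᵀP + PL + εI + Σₘ sₘδ²RₘRₘ, P + Σᵢ μᵢMᵢ], [P + Σᵢ μᵢMᵢᵀ, −Σₘ sₘeₘeₘᵀ + Σⱼ κⱼTⱼ]]`,
where `M₀ = I`, `Mᵢ = eᵢvᵀ` and `Tⱼ = eⱼvᵀ + veⱼᵀ`. -/
def Gmat {n : ℕ} (L : Matrix (Fin n) (Fin n) ℝ) (R : Fin n → Matrix (Fin n) (Fin n) ℝ)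
    (v : Fin n → ℝ) (ε δ : ℝ) (μ : Fin (n+1) → ℝ) (κ s : Fin n → ℝ)
    (P : Matrix (Fin n) (Fin n) ℝ) : Matrix (Fin n ⊕ Fin n) (Fin n ⊕ Fin n) ℝ :=
  Matrix.fromBlocks
    (Lᵀ * P + P * L + ε • (1 : Matrix (Fin n) (Fin n) ℝ) + ∑ m, (s m * δ ^ 2) • (R m * R m))
    (P + (μ 0 • (1 : Matrix (Fin n) (Fin n) ℝ) +
      ∑ i : Fin n, μ i.succ • Matrix.vecMulVec (Pi.single i (1:ℝ)) v))
    (P + (μ 0 • (1 : Matrix (Fin n) (Fin n) ℝ) +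
      ∑ i : Fin n, μ i.succ • Matrix.vecMulVec v (Pi.single i (1:ℝ))))
    (-(∑ m, s m • Matrix.vecMulVec (Pi.single m (1:ℝ)) (Pi.single m (1:ℝ))) +
      ∑ j, κ j • (Matrix.vecMulVec (Pi.single j (1:ℝ)) v + Matrix.vecMulVec v (Pi.single j (1:ℝ))))

theorem dotProduct_self_le_of_eNorm_le {n : ℕ} {a : Fin n → ℝ} {δ : ℝ} (hδ : 0 < δ)
    (ha : eNorm a ≤ δ) : a ⬝ᵥ a ≤ δ ^ 2 := by
  have h := (Real.sqrt_le_left hδ.le).1 ha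
  simpa [dotProduct, sq] using h

/-- On the ball of radius `δ`, Cauchy–Schwarz bounds each component of `Υ`. -/
theorem Ups_sq_le {n : ℕ} (R : Fin n → Matrix (Fin n) (Fin n) ℝ) {a : Fin n → ℝ} {δ : ℝ}
    (hδ : 0 < δ) (ha : eNorm a ≤ δ) (m : Fin n) :
    Ups R a m ^ 2 ≤ δ ^ 2 * ((R m).mulVec a ⬝ᵥ (R m).mulVec a) := by
  have h1 : Ups R a m ^ 2 ≤ (a ⬝ᵥ a) * ((R m).mulVec a ⬝ᵥ (R m).mulVec a) := by
    have h := Finset.sum_mul_sq_le_sq_mul_sq Finset.univ a ((R m).mulVec a)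
    simpa [Ups, dotProduct, sq] using h
  have h2 : 0 ≤ (R m).mulVec a ⬝ᵥ (R m).mulVec a :=
    Finset.sum_nonneg fun i _ => mul_self_nonneg _
  exact h1.trans (mul_le_mul_of_nonneg_right (dotProduct_self_le_of_eNorm_le hδ ha) h2)

theorem dotProduct_sum_mulVec {n : ℕ} {ι : Type*} [Fintype ι] (x y : Fin n → ℝ)
    (A : ι → Matrix (Fin n) (Fin n) ℝ) :
    x ⬝ᵥ (∑ i, A i).mulVec y = ∑ i, x ⬝ᵥ (A i).mulVec y := by
  rw [Matrix.sum_mulVec, dotProduct_sum]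

theorem dotProduct_vecMulVec_mulVec {n : ℕ} (x y u w : Fin n → ℝ) :
    x ⬝ᵥ (vecMulVec u w).mulVec y = (x ⬝ᵥ u) * (w ⬝ᵥ y) := by
  rw [Matrix.vecMulVec_mulVec, op_smul_eq_smul, dotProduct_smul, smul_eq_mul, mul_comm]

theorem dotProduct_mulVec_of_transpose_eq {n : ℕ} {A : Matrix (Fin n) (Fin n) ℝ} (hA : Aᵀ = A)
    (x y : Fin n → ℝ) : x ⬝ᵥ A.mulVec y = y ⬝ᵥ A.mulVec x := by
  rw [dotProduct_mulVec, ← mulVec_transpose, hA, dotProduct_comm]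

/-- **LMI-certified local dissipation inequality**: if G ⪯ 0 and sₘ ≥ 0, then for all
‖a‖ ≤ δ the quadratic Lyapunov function V(a) = aᵀPa satisfies
2aᵀP(La + Υ(a)) ≤ −ε aᵀa along the unforced dynamics ȧ = La + Υ(a). -/
theorem lmi_dissipation
    {n : ℕ} (L : Matrix (Fin n) (Fin n) ℝ)
    (R : Fin n → Matrix (Fin n) (Fin n) ℝ) (hRsym : ∀ m, (R m)ᵀ = R m)
    (v : Fin n → ℝ)
    (hloss : ∀ a : Fin n → ℝ, a ⬝ᵥ Ups R a = 0)
    (hlossv : ∀ a : Fin n → ℝ, v ⬝ᵥ Ups R a = 0)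
    (ε δ : ℝ) (hε : 0 < ε) (hδ : 0 < δ)
    (μ : Fin (n+1) → ℝ) (κ s : Fin n → ℝ)
    (P : Matrix (Fin n) (Fin n) ℝ) (hPsym : Pᵀ = P)
    (hG : (-(Gmat L R v ε δ μ κ s P)).PosSemidef)
    (hs : ∀ m, 0 ≤ s m) :
    ∀ a : Fin n → ℝ, eNorm a ≤ δ →
      2 * (a ⬝ᵥ P.mulVec (L.mulVec a + Ups R a)) ≤ -ε * (a ⬝ᵥ a) := by
  intro a ha
  have hz := hG.dotProduct_mulVec_nonneg (Sum.elim a (Ups R a))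
  have hl := hloss a
  have hv := hlossv a
  have hb : ∑ m, s m * Ups R a m ^ 2 ≤
      ∑ m, s m * δ ^ 2 * ((R m).mulVec a ⬝ᵥ (R m).mulVec a) :=
    Finset.sum_le_sum fun m _ => by
      rw [mul_assoc]
      exact mul_le_mul_of_nonneg_left (Ups_sq_le R hδ ha m) (hs m)
  generalize Ups R a = y at hz hl hv hb ⊢
  have hl' : y ⬝ᵥ a = 0 := by rw [dotProduct_comm, hl]
  have hv' : y ⬝ᵥ v = 0 := by rw [dotProduct_comm, hv]
  have hRR : ∀ m, a ⬝ᵥ (R m * R m).mulVec a = (R m).mulVec a ⬝ᵥ (R m).mulVec a := fun m => by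
    rw [← mulVec_mulVec, dotProduct_mulVec_of_transpose_eq (hRsym m)]
  have hLP : a ⬝ᵥ (Lᵀ * P).mulVec a = a ⬝ᵥ (P * L).mulVec a := by
    rw [← mulVec_mulVec, ← mulVec_mulVec, dotProduct_mulVec, vecMul_transpose,
      dotProduct_mulVec_of_transpose_eq hPsym]
  have hPy := dotProduct_mulVec_of_transpose_eq hPsym y a
  rw [star_trivial, neg_mulVec, dotProduct_neg, Gmat, fromBlocks_mulVec,
    Sum.elim_comp_inl, Sum.elim_comp_inr, sumElim_dotProduct_sumElim] at hz
  simp only [add_mulVec, neg_mulVec, dotProduct_add, dotProduct_neg, dotProduct_sum_mulVec,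
    smul_mulVec, dotProduct_smul, one_mulVec, dotProduct_vecMulVec_mulVec, smul_eq_mul,
    hl, hl', hv, hv', hRR, hLP, hPy, mul_zero, zero_mul, add_zero, Finset.sum_const_zero,
    dotProduct_single_one, single_one_dotProduct] at hz
  simp only [← sq] at hz
  rw [mulVec_add, dotProduct_add, mulVec_mulVec]
  linarith
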